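/- Let λ > 0 and let f be a continuously differentiable function on the closed unit ball B^d. Then for every n ≥ 2, 1 ≤ j ≤ n/2, and 1 ≤ ν ≤ σ_{n−2j}, ⟨f, U_{j,ν}^n⟩_I = −2jλ·(1/ω_d)∫_{S^{d−1}} f(y) Y_ν^{n−2j}(y) dω(y) + 4j(n−j+(d−2)/2)·(λ/ω_d)∫_{B^d} f(y) P_{j−1,ν}^{n−2}(W_1; y) dy, where P_{j−1,ν}^{n−2}(W_1; y) = P_{j−1}^{(1, n−2j+(d−2)/2)}(2‖y‖²−1)·Y_ν^{n−2j}(y). -/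

import Mathlib

open MeasureTheory Metric MvPolynomial RealInnerProductSpace

noncomputable section

/-- Generalized binomial coefficient `C(z, k)` for real `z`. -/
def genBinom (z : ℝ) (k : ℕ) : ℝ := (∏ i ∈ Finset.range k, (z - i)) / (Nat.factorial k)

/-- The Jacobi polynomial `P_n^{(a,b)}`, normalized so that `P_n^{(a,b)}(1) = C(n+a, n)`. -/
def jacobiPoly (n : ℕ) (a b : ℝ) : Polynomial ℝ :=
  ∑ s ∈ Finset.range (n + 1),
    Polynomial.C (genBinom ((n : ℝ) + a) (n - s) * genBinom ((n : ℝ) + b) s) *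
      (Polynomial.C (2⁻¹) * (Polynomial.X - 1)) ^ s *
      (Polynomial.C (2⁻¹) * (Polynomial.X + 1)) ^ (n - s)

/-- The Jacobi polynomial as a real function. -/
def jacobiR (n : ℕ) (a b x : ℝ) : ℝ := (jacobiPoly n a b).eval x

/-- The Laplace operator on polynomials in `d` variables. -/
def mvLaplacian {d : ℕ} (p : MvPolynomial (Fin d) ℝ) : MvPolynomial (Fin d) ℝ :=
  ∑ i : Fin d, pderiv i (pderiv i p)

/-- The polynomial `‖x‖² = x₁² + ⋯ + x_d²`. -/
def sumSq (d : ℕ) : MvPolynomial (Fin d) ℝ := ∑ i : Fin d, X i ^ 2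

/-- `σ_m`, the dimension of the space of spherical harmonics of degree `m` in `d` variables. -/
def sigmaDim (d m : ℕ) : ℕ := (m + d - 1).choose (d - 1) - (m + d - 3).choose (d - 1)

/-- The surface area `ω_d = 2 π^{d/2} / Γ(d/2)` of the unit sphere `S^{d-1}`. -/
def omegaD (d : ℕ) : ℝ := 2 * Real.pi ^ ((d : ℝ) / 2) / Real.Gamma ((d : ℝ) / 2)

/-- Euclidean space `ℝ^d`. -/
abbrev Edim (d : ℕ) := EuclideanSpace ℝ (Fin d)

/-- Evaluation of a polynomial in `d` variables at a point of `ℝ^d`. -/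
def pEval {d : ℕ} (p : MvPolynomial (Fin d) ℝ) (x : Edim d) : ℝ := eval (fun i => x i) p

/-- The surface measure `dω` on the unit sphere `S^{d-1}`. -/
def sphMeasure (d : ℕ) : Measure (sphere (0 : Edim d) 1) :=
  (volume : Measure (Edim d)).toSphere

/-- The Sobolev inner product `⟨f,g⟩_I`. -/
def innerI (d : ℕ) (lam : ℝ) (f g : Edim d → ℝ) : ℝ :=
  (lam / omegaD d) * ∫ x in closedBall (0 : Edim d) 1, ⟪gradient f x, gradient g x⟫ +
    (1 / omegaD d) * ∫ y : sphere (0 : Edim d) 1, f y * g y ∂(sphMeasure d)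

/-- The Sobolev inner product `⟨f,g⟩_II`. -/
def innerII (d : ℕ) (lam : ℝ) (f g : Edim d → ℝ) : ℝ :=
  (lam / omegaD d) * ∫ x in closedBall (0 : Edim d) 1, ⟪gradient f x, gradient g x⟫ +
    f 0 * g 0

/-- The polynomials `U_{j,ν}^n`. -/
def Upoly (d : ℕ) (Y : (m : ℕ) → Fin (sigmaDim d m) → MvPolynomial (Fin d) ℝ)
    (n j : ℕ) (ν : Fin (sigmaDim d (n - 2 * j))) : MvPolynomial (Fin d) ℝ :=
  if j = 0 then Y (n - 2 * j) ν
  else (1 - sumSq d) *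
      Polynomial.aeval (2 * sumSq d - 1)
        (jacobiPoly (j - 1) 1 ((n : ℝ) - 2 * (j : ℝ) + ((d : ℝ) - 2) / 2)) *
      Y (n - 2 * j) ν

/-!
Green's formula on the ball, valid for a Lipschitz `f` and a `C²` function `g`, follows from the
divergence theorem for Lipschitz functions. The latter is obtained by integrating by parts against
the cone `(s - ‖x‖)⁺`, whose gradient is `-x / ‖x‖` on the ball of radius `s` and zero outside,
writing the result in polar coordinates, and differentiating both sides in `s`.

With `β = n - 2j + (d-2)/2` and `Q(t) = (1 - t) P_{j-1}^{(1,β)}(2t - 1)`, the polynomial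
`U = U_{j,ν}^n` is `Q(‖x‖²) Y(x)`. One contiguous relation for Jacobi polynomials gives
`Q' = -j P_{j-1}^{(0,β+1)}(2t - 1)`, a second one `t Q'' + (β + 1) Q' = -j (n-j+(d-2)/2) P`, where
`P(t) = P_{j-1}^{(1,β)}(2t - 1)`. As `Y` is harmonic and homogeneous, the latter says that
`ΔU = -4j (n-j+(d-2)/2) P(‖x‖²) Y`. Moreover `Q(1) = 0` and `Q'(1) = -j`, so that on the sphere `U`
vanishes and its normal derivative is `-2j Y`.
-/

section Jacobi

open Polynomial (derivative)

variable (n k : ℕ) (a b z : ℝ)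

lemma succ_mul_genBinom_succ : (k + 1) * genBinom z (k + 1) = (z - k) * genBinom z k := by
  rw [genBinom, genBinom, Finset.prod_range_succ, Nat.factorial_succ]
  push_cast
  field_simp

lemma sub_mul_genBinom : (z - k) * genBinom z k = z * genBinom (z - 1) k := by
  have hprod : (∏ i ∈ Finset.range k, (z - i)) * (z - k)
      = (∏ i ∈ Finset.range k, (z - 1 - i)) * z := by
    rw [← Finset.prod_range_succ, Finset.prod_range_succ']
    simp [sub_sub, add_comm]
  rw [genBinom, genBinom]
  linear_combination hprod / k.factorial

lemma genBinom_add_one_succ :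
    genBinom (z + 1) (k + 1) = genBinom z k + genBinom z (k + 1) := by
  have hleft := succ_mul_genBinom_succ k (z + 1)
  have habsorb := sub_mul_genBinom k (z + 1)
  have hright := succ_mul_genBinom_succ k z
  rw [add_sub_cancel_right] at habsorb
  have hk : (k + 1 : ℝ) ≠ 0 := by positivity
  refine mul_left_cancel₀ hk ?_
  linear_combination hleft + habsorb - hright

lemma genBinom_self : genBinom n n = 1 := by
  induction n with
  | zero => simp [genBinom]
  | succ n ih =>
    have hsucc := succ_mul_genBinom_succ n ((n + 1 : ℕ) : ℝ)
    have habsorb := sub_mul_genBinom n ((n + 1 : ℕ) : ℝ)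
    push_cast at *
    rw [add_sub_cancel_right, ih] at habsorb
    refine mul_left_cancel₀ (by positivity : (n + 1 : ℝ) ≠ 0) ?_
    rw [hsucc, habsorb]

lemma jacobiPoly_eval_one : (jacobiPoly n a b).eval 1 = genBinom (n + a) n := by
  rw [jacobiPoly, Polynomial.eval_finsetSum, Finset.sum_range_succ']
  simp [genBinom, ← two_mul]

/-- The product `((X - 1) / 2)ⁱ ((X + 1) / 2)ʲ`; the Jacobi polynomials of degree `n` are given by
their coefficients with respect to those with `i + j = n`. -/
def jacobiBasis (i j : ℕ) : Polynomial ℝ :=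
  (Polynomial.C 2⁻¹ * (Polynomial.X - 1)) ^ i * (Polynomial.C 2⁻¹ * (Polynomial.X + 1)) ^ j

lemma jacobiPoly_eq_sum_jacobiBasis :
    jacobiPoly n a b = ∑ s ∈ Finset.range (n + 1),
      Polynomial.C (genBinom (n + a) (n - s) * genBinom (n + b) s) * jacobiBasis s (n - s) := by
  simp only [jacobiPoly, jacobiBasis, mul_assoc]

lemma jacobiBasis_comp_neg_X (i j : ℕ) :
    (jacobiBasis i j).comp (-Polynomial.X) = (-1) ^ (i + j) * jacobiBasis j i := by
  have hminus : Polynomial.C (2⁻¹ : ℝ) * (-Polynomial.X - 1)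
      = -(Polynomial.C 2⁻¹ * (Polynomial.X + 1)) := by ring
  have hplus : Polynomial.C (2⁻¹ : ℝ) * (-Polynomial.X + 1)
      = -(Polynomial.C 2⁻¹ * (Polynomial.X - 1)) := by ring
  simp only [jacobiBasis, Polynomial.mul_comp, Polynomial.pow_comp, Polynomial.C_comp,
    Polynomial.sub_comp, Polynomial.add_comp, Polynomial.X_comp, Polynomial.one_comp]
  rw [hminus, hplus, neg_pow, neg_pow (Polynomial.C 2⁻¹ * (Polynomial.X - 1)), pow_add]
  exact (mul_mul_mul_comm _ _ _ _).trans (congrArg _ (mul_comm _ _))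

lemma jacobiPoly_comp_neg_X :
    (jacobiPoly n a b).comp (-Polynomial.X) = (-1) ^ n * jacobiPoly n b a := by
  rw [jacobiPoly_eq_sum_jacobiBasis, jacobiPoly_eq_sum_jacobiBasis, Polynomial.sum_comp,
    ← Finset.sum_range_reflect, Finset.mul_sum]
  refine Finset.sum_congr rfl fun s hs => ?_
  have hs : s ≤ n := Nat.lt_succ_iff.mp (Finset.mem_range.mp hs)
  rw [Polynomial.mul_comp, Polynomial.C_comp, jacobiBasis_comp_neg_X, Nat.add_sub_cancel,
    Nat.sub_sub_self hs, Nat.sub_add_cancel hs, mul_comm (genBinom _ s), mul_left_comm]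

lemma one_add_X_mul_derivative_jacobiBasis (i j : ℕ) :
    (1 + Polynomial.X) * derivative (jacobiBasis i j) =
      Polynomial.C (i : ℝ) * jacobiBasis (i - 1) (j + 1) +
        Polynomial.C (j : ℝ) * jacobiBasis i j := by
  have hhalf : (2 : Polynomial ℝ) * Polynomial.C 2⁻¹ = 1 := by
    rw [← Polynomial.C_ofNat, ← Polynomial.C_mul, mul_inv_cancel₀ two_ne_zero, Polynomial.C_1]
  have hX : (1 + Polynomial.X : Polynomial ℝ) =
      2 * (Polynomial.C 2⁻¹ * (Polynomial.X + 1)) := by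
    linear_combination -(Polynomial.X + 1) * hhalf
  have hu : derivative (Polynomial.C (2⁻¹ : ℝ) * (Polynomial.X - 1)) = Polynomial.C 2⁻¹ := by simp
  have hw : derivative (Polynomial.C (2⁻¹ : ℝ) * (Polynomial.X + 1)) = Polynomial.C 2⁻¹ := by simp
  rw [jacobiBasis, jacobiBasis, Polynomial.derivative_mul, Polynomial.derivative_pow,
    Polynomial.derivative_pow, hX, hu, hw]
  set u : Polynomial ℝ := Polynomial.C 2⁻¹ * (Polynomial.X - 1)
  set w : Polynomial ℝ := Polynomial.C 2⁻¹ * (Polynomial.X + 1)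
  cases j with
  | zero =>
    simp only [Nat.cast_zero, Polynomial.C_0, zero_mul, mul_zero, add_zero, pow_zero, zero_add]
    linear_combination Polynomial.C (i : ℝ) * u ^ (i - 1) * w * hhalf
  | succ j =>
    rw [Nat.add_sub_cancel]
    linear_combination (Polynomial.C (i : ℝ) * u ^ (i - 1) * w ^ (j + 2) +
      Polynomial.C ((j + 1 : ℕ) : ℝ) * u ^ i * w ^ (j + 1)) * hhalf

lemma one_add_X_mul_derivative_sum_jacobiBasis (c : ℕ → ℝ) :
    (1 + Polynomial.X) *
          derivative (∑ s ∈ Finset.range (n + 1), Polynomial.C (c s) * jacobiBasis s (n - s)) +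
        Polynomial.C b * ∑ s ∈ Finset.range (n + 1), Polynomial.C (c s) * jacobiBasis s (n - s) =
      ∑ s ∈ Finset.range n,
          Polynomial.C (c (s + 1) * (s + 1) + c s * (n - s + b)) * jacobiBasis s (n - s) +
        Polynomial.C (b * c n) * jacobiBasis n 0 := by
  have hterm (s : ℕ) :
      (1 + Polynomial.X) * derivative (Polynomial.C (c s) * jacobiBasis s (n - s)) +
          Polynomial.C b * (Polynomial.C (c s) * jacobiBasis s (n - s)) =
        Polynomial.C (c s * s) * jacobiBasis (s - 1) (n - s + 1) +
          Polynomial.C (c s * ((n - s : ℕ) + b)) * jacobiBasis s (n - s) := by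
    rw [Polynomial.derivative_C_mul]
    simp only [Polynomial.C_mul, Polynomial.C_add]
    linear_combination Polynomial.C (c s) * one_add_X_mul_derivative_jacobiBasis s (n - s)
  have hshift : ∑ s ∈ Finset.range (n + 1),
        Polynomial.C (c s * s) * jacobiBasis (s - 1) (n - s + 1) =
      ∑ s ∈ Finset.range n, Polynomial.C (c (s + 1) * (s + 1)) * jacobiBasis s (n - s) := by
    rw [Finset.sum_range_succ', Nat.cast_zero, mul_zero, Polynomial.C_0, zero_mul, add_zero]
    refine Finset.sum_congr rfl fun s hs => ?_
    rw [Nat.add_sub_cancel, show n - (s + 1) + 1 = n - s by grind, Nat.cast_succ]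
  rw [Polynomial.derivative_sum, Finset.mul_sum, Finset.mul_sum, ← Finset.sum_add_distrib,
    Finset.sum_congr rfl fun s _ => hterm s, Finset.sum_add_distrib, hshift,
    Finset.sum_range_succ, ← add_assoc, ← Finset.sum_add_distrib, Nat.sub_self, Nat.cast_zero,
    zero_add, mul_comm (c n)]
  congr 1
  refine Finset.sum_congr rfl fun s hs => ?_
  rw [Nat.cast_sub (Finset.mem_range.mp hs).le, ← add_mul, ← Polynomial.C_add]

lemma jacobiPoly_coeff_contiguous {s : ℕ} (hs : s < n) :
    genBinom (n + a) (n - (s + 1)) * genBinom (n + b) (s + 1) * (s + 1) +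
        genBinom (n + a) (n - s) * genBinom (n + b) s * (n - s + b) =
      (n + b) * (genBinom (n + (a + 1)) (n - s) * genBinom (n + (b - 1)) s) := by
  obtain ⟨m, rfl⟩ := Nat.exists_eq_add_of_lt hs
  have hsucc := succ_mul_genBinom_succ s ((s + m + 1 : ℕ) + b)
  have habsorb := sub_mul_genBinom s ((s + m + 1 : ℕ) + b)
  have hpascal := genBinom_add_one_succ m ((s + m + 1 : ℕ) + a)
  rw [show s + m + 1 - (s + 1) = m by omega, show s + m + 1 - s = m + 1 by omega,
    ← add_assoc, ← add_sub_assoc, hpascal]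
  linear_combination genBinom ((s + m + 1 : ℕ) + a) m * hsucc +
    (genBinom ((s + m + 1 : ℕ) + a) m + genBinom ((s + m + 1 : ℕ) + a) (m + 1)) * habsorb

lemma one_add_X_mul_derivative_jacobiPoly :
    (1 + Polynomial.X) * derivative (jacobiPoly n a b) + Polynomial.C b * jacobiPoly n a b =
      Polynomial.C (n + b) * jacobiPoly n (a + 1) (b - 1) := by
  have htop : b * (genBinom (n + a) (n - n) * genBinom (n + b) n) =
      (n + b) * (genBinom (n + (a + 1)) (n - n) * genBinom (n + (b - 1)) n) := by
    have habsorb := sub_mul_genBinom n (n + b)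
    rw [add_sub_cancel_left, add_sub_assoc] at habsorb
    simpa [genBinom] using habsorb
  rw [jacobiPoly_eq_sum_jacobiBasis, jacobiPoly_eq_sum_jacobiBasis,
    one_add_X_mul_derivative_sum_jacobiBasis n b
      (fun s => genBinom (n + a) (n - s) * genBinom (n + b) s),
    Finset.sum_range_succ, mul_add, Finset.mul_sum, htop, Polynomial.C_mul, mul_assoc, Nat.sub_self]
  congr 1
  refine Finset.sum_congr rfl fun s hs => ?_
  rw [jacobiPoly_coeff_contiguous n a b (Finset.mem_range.mp hs), Polynomial.C_mul, mul_assoc]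

lemma one_sub_X_mul_derivative_jacobiPoly :
    (1 - Polynomial.X) * derivative (jacobiPoly n a b) - Polynomial.C a * jacobiPoly n a b =
      -(Polynomial.C (n + a) * jacobiPoly n (a - 1) (b + 1)) := by
  have hreflect := congrArg (fun p => p.comp (-Polynomial.X))
    (one_add_X_mul_derivative_jacobiPoly n b a)
  have hderiv := congrArg derivative (jacobiPoly_comp_neg_X n b a)
  have hsign : (-1 : Polynomial ℝ) ^ n ≠ 0 := pow_ne_zero n (neg_ne_zero.mpr one_ne_zero)
  have hsign' : derivative ((-1 : Polynomial ℝ) ^ n) = 0 := by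
    rw [Polynomial.derivative_pow]; simp
  simp only [Polynomial.add_comp, Polynomial.mul_comp, Polynomial.one_comp, Polynomial.X_comp,
    Polynomial.C_comp, jacobiPoly_comp_neg_X] at hreflect
  rw [Polynomial.derivative_comp, Polynomial.derivative_mul, hsign', Polynomial.derivative_neg,
    Polynomial.derivative_X] at hderiv
  refine mul_left_cancel₀ hsign ?_
  linear_combination (Polynomial.X - 1) * hderiv - hreflect

/-- The radial profile of `U_{j,ν}^n`, as a polynomial in `t = ‖x‖²`: with `β = n - 2j + (d-2)/2`,
`U_{j,ν}^n(x) = jacobiProfile (j - 1) β (‖x‖²) * Y_ν^{n-2j}(x)`. -/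
def jacobiProfile (N : ℕ) (β : ℝ) : Polynomial ℝ :=
  (1 - Polynomial.X) * (jacobiPoly N 1 β).comp (2 * Polynomial.X - 1)

lemma jacobiProfile_eval_one (N : ℕ) (β : ℝ) : (jacobiProfile N β).eval 1 = 0 := by
  simp [jacobiProfile]

lemma derivative_comp_two_mul_X_sub_one (p : Polynomial ℝ) :
    derivative (p.comp (2 * Polynomial.X - 1)) =
      2 * (derivative p).comp (2 * Polynomial.X - 1) := by
  simp [Polynomial.derivative_comp, Polynomial.derivative_mul]

lemma derivative_jacobiProfile (N : ℕ) (β : ℝ) :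
    derivative (jacobiProfile N β) =
      -(Polynomial.C (N + 1 : ℝ) * (jacobiPoly N 0 (β + 1)).comp (2 * Polynomial.X - 1)) := by
  have hcontig := congrArg (fun p => p.comp (2 * Polynomial.X - 1))
    (one_sub_X_mul_derivative_jacobiPoly N 1 β)
  simp only [Polynomial.sub_comp, Polynomial.neg_comp, Polynomial.mul_comp, Polynomial.one_comp,
    Polynomial.X_comp, Polynomial.C_comp, Polynomial.C_1, sub_self] at hcontig
  rw [← hcontig, jacobiProfile, Polynomial.derivative_mul, derivative_comp_two_mul_X_sub_one]
  simp only [Polynomial.derivative_sub, Polynomial.derivative_one, Polynomial.derivative_X]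
  ring

lemma derivative_jacobiProfile_eval_one (N : ℕ) (β : ℝ) :
    (derivative (jacobiProfile N β)).eval 1 = -(N + 1) := by
  have hval : (jacobiPoly N 0 (β + 1)).eval 1 = 1 := by
    rw [jacobiPoly_eval_one, add_zero, genBinom_self]
  have hone : (2 : ℝ) - 1 = 1 := by norm_num
  simp [derivative_jacobiProfile, Polynomial.eval_comp, hone, hval]

lemma jacobiProfile_ode (N : ℕ) (β : ℝ) :
    Polynomial.X * derivative (derivative (jacobiProfile N β)) +
        Polynomial.C (β + 1) * derivative (jacobiProfile N β) =
      -(Polynomial.C ((N + 1) * (N + 1 + β)) *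
        (jacobiPoly N 1 β).comp (2 * Polynomial.X - 1)) := by
  have hcontig := congrArg (fun p => p.comp (2 * Polynomial.X - 1))
    (one_add_X_mul_derivative_jacobiPoly N 0 (β + 1))
  simp only [Polynomial.add_comp, Polynomial.mul_comp, Polynomial.one_comp, Polynomial.X_comp,
    Polynomial.C_comp, zero_add, add_sub_cancel_right] at hcontig
  rw [derivative_jacobiProfile, Polynomial.derivative_neg, Polynomial.derivative_C_mul,
    derivative_comp_two_mul_X_sub_one, Polynomial.C_mul,
    show (N : ℝ) + 1 + β = N + (β + 1) by ring]
  linear_combination -Polynomial.C (N + 1 : ℝ) * hcontig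

end Jacobi

section PolarCoordinates

open Module (finrank)

lemma integral_volumeIoiPow (n : ℕ) (g : ℝ → ℝ) :
    ∫ ρ : Set.Ioi (0 : ℝ), g ρ ∂(Measure.volumeIoiPow n) =
      ∫ ρ in Set.Ioi (0 : ℝ), ρ ^ n * g ρ := by
  simp only [Measure.volumeIoiPow, ENNReal.ofReal]
  rw [integral_withDensity_eq_integral_smul
      (measurable_subtype_coe.pow_const n).real_toNNReal,
    integral_subtype_comap measurableSet_Ioi fun ρ ↦ Real.toNNReal (ρ ^ n) • g ρ]
  refine setIntegral_congr_fun measurableSet_Ioi fun ρ hρ => ?_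
  simp only [NNReal.smul_def, Real.coe_toNNReal _ (pow_nonneg (le_of_lt hρ) n), smul_eq_mul]

variable {E : Type*} [NormedAddCommGroup E] [NormedSpace ℝ E] [FiniteDimensional ℝ E]
  [Nontrivial E] [MeasurableSpace E] [BorelSpace E] {μ : Measure E} [μ.IsAddHaarMeasure]

lemma integral_eq_integral_Ioi_sphere {h : E → ℝ} (hh : Integrable h μ) :
    ∫ x, h x ∂μ = ∫ ρ in Set.Ioi (0 : ℝ), ρ ^ (finrank ℝ E - 1) *
      ∫ y : sphere (0 : E) 1, h (ρ • (y : E)) ∂μ.toSphere := by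
  have hpres := μ.measurePreserving_homeomorphUnitSphereProd
  have hemb := (homeomorphUnitSphereProd E).measurableEmbedding
  let g : sphere (0 : E) 1 × Set.Ioi (0 : ℝ) → ℝ := fun z => h (z.2.1 • (z.1 : E))
  have hcomp : g ∘ homeomorphUnitSphereProd E = h ∘ Subtype.val := by
    funext x
    simp only [g, Function.comp_apply]
    rw [← homeomorphUnitSphereProd_symm_apply_coe, Homeomorph.symm_apply_apply]
  have hcompl : MeasurableSet ({0}ᶜ : Set E) := (measurableSet_singleton 0).compl
  have hint : Integrable g (μ.toSphere.prod (Measure.volumeIoiPow (finrank ℝ E - 1))) := by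
    rw [← hpres.integrable_comp_emb hemb, hcomp,
      ← integrableOn_iff_comap_subtypeVal hcompl]
    exact hh.integrableOn
  calc ∫ x, h x ∂μ
      = ∫ x : ({0}ᶜ : Set E), (g ∘ homeomorphUnitSphereProd E) x ∂μ.comap Subtype.val := by
        rw [hcomp]
        exact ((integral_subtype_comap hcompl h).trans (by rw [restrict_compl_singleton])).symm
    _ = ∫ z, g z ∂(μ.toSphere.prod (Measure.volumeIoiPow (finrank ℝ E - 1))) :=
        hpres.integral_comp hemb g
    _ = ∫ ρ : Set.Ioi (0 : ℝ), ∫ y : sphere (0 : E) 1, h (ρ.1 • (y : E)) ∂μ.toSphere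
          ∂Measure.volumeIoiPow (finrank ℝ E - 1) := integral_prod_symm g hint
    _ = _ := integral_volumeIoiPow _ fun ρ => ∫ y : sphere (0 : E) 1, h (ρ • (y : E)) ∂μ.toSphere

lemma setIntegral_ball_eq_integral_sphere {h : E → ℝ} {s : ℝ} (hs : 0 ≤ s)
    (hh : IntegrableOn h (ball 0 s) μ) :
    ∫ x in ball 0 s, h x ∂μ = ∫ ρ in 0..s, ρ ^ (finrank ℝ E - 1) *
      ∫ y : sphere (0 : E) 1, h (ρ • (y : E)) ∂μ.toSphere := by
  have hnorm {ρ : ℝ} (hρ : 0 < ρ) (y : sphere (0 : E) 1) : ‖ρ • (y : E)‖ = ρ := by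
    rw [norm_smul, norm_eq_of_mem_sphere, mul_one, Real.norm_of_nonneg hρ.le]
  rw [← integral_indicator measurableSet_ball,
    integral_eq_integral_Ioi_sphere ((integrable_indicator_iff measurableSet_ball).2 hh),
    intervalIntegral.integral_of_le hs, integral_Ioc_eq_integral_Ioo,
    ← Set.Ioi_inter_Iio, ← setIntegral_indicator measurableSet_Iio]
  refine setIntegral_congr_fun measurableSet_Ioi fun ρ hρ => ?_
  by_cases hρs : ρ < s
  · have hmem (y : sphere (0 : E) 1) : ρ • (y : E) ∈ ball 0 s := by
      rwa [mem_ball_zero_iff, hnorm hρ]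
    simp only [Set.indicator_of_mem (hmem _), Set.indicator_of_mem (Set.mem_Iio.2 hρs)]
  · have hmem (y : sphere (0 : E) 1) : ρ • (y : E) ∉ ball 0 s := by
      rwa [mem_ball_zero_iff, hnorm hρ]
    simp only [Set.indicator_of_notMem (hmem _), Set.indicator_of_notMem (mt Set.mem_Iio.1 hρs),
      integral_zero, mul_zero]

end PolarCoordinates

section Cone

variable {E : Type*} [NormedAddCommGroup E]

/-- The cone over the ball of radius `s`: the Lipschitz weight against which functions on the ball
are integrated by parts. -/
def cone (s : ℝ) (x : E) : ℝ := max (s - ‖x‖) 0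

lemma cone_of_mem_ball {s : ℝ} {x : E} (hx : x ∈ ball 0 s) : cone s x = s - ‖x‖ :=
  max_eq_left (sub_nonneg.2 (mem_ball_zero_iff.1 hx).le)

lemma cone_of_notMem_ball {s : ℝ} {x : E} (hx : x ∉ ball 0 s) : cone s x = 0 :=
  max_eq_right (sub_nonpos.2 (not_lt.1 (mt mem_ball_zero_iff.2 hx)))

lemma continuous_cone (s : ℝ) : Continuous (cone s : E → ℝ) := by
  unfold cone
  fun_prop

lemma lipschitzWith_cone (s : ℝ) : LipschitzWith 1 (cone s : E → ℝ) := by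
  refine LipschitzWith.of_le_add fun x y => max_le ?_ (add_nonneg (le_max_right _ _) dist_nonneg)
  have hcone : s - ‖y‖ ≤ cone s y := le_max_left _ _
  have htri : ‖y‖ - ‖x‖ ≤ dist x y := dist_comm x y ▸ dist_eq_norm y x ▸ norm_sub_norm_le y x
  linarith

lemma hasCompactSupport_cone [ProperSpace E] (s : ℝ) : HasCompactSupport (cone s : E → ℝ) :=
  .of_support_subset_isCompact (isCompact_closedBall 0 s) fun _ hx =>
    ball_subset_closedBall (not_imp_comm.1 cone_of_notMem_ball hx)

lemma lipschitzWith_cone_radius (x : E) : LipschitzWith 1 (cone · x) := by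
  refine LipschitzWith.of_le_add fun s u => max_le ?_ (add_nonneg (le_max_right _ _) dist_nonneg)
  have hcone : u - ‖x‖ ≤ cone u x := le_max_left _ _
  have hdist : s - u ≤ dist s u := le_abs_self _
  linarith

lemma hasDerivAt_cone_radius {r : ℝ} {x : E} (hx : x ∈ ball 0 r) :
    HasDerivAt (cone · x) 1 r := by
  refine ((hasDerivAt_id r).sub_const ‖x‖).congr_of_eventuallyEq ?_
  filter_upwards [lt_mem_nhds (mem_ball_zero_iff.1 hx)] with s hs
  exact cone_of_mem_ball (mem_ball_zero_iff.2 hs)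

lemma hasDerivAt_setIntegral_cone_mul [MeasurableSpace E] [BorelSpace E]
    [SecondCountableTopology E] {μ : Measure E} {r : ℝ} {h : E → ℝ}
    (hh : IntegrableOn h (ball 0 r) μ) :
    HasDerivAt (fun s => ∫ x in ball 0 r, cone s x * h x ∂μ) (∫ x in ball 0 r, h x ∂μ) r := by
  have hmeas (s : ℝ) : AEStronglyMeasurable (fun x => cone s x * h x) (μ.restrict (ball 0 r)) :=
    (continuous_cone s).aestronglyMeasurable.mul hh.aestronglyMeasurable
  have hbound (x : E) (hx : x ∈ ball 0 r) : ‖cone r x * h x‖ ≤ r * ‖h x‖ := by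
    rw [norm_mul, cone_of_mem_ball hx, Real.norm_of_nonneg (by simpa using hx.out.le)]
    gcongr
    exact sub_le_self _ (norm_nonneg x)
  refine (hasDerivAt_integral_of_dominated_loc_of_lip (bound := fun x => |h x|) Filter.univ_mem
    (.of_forall hmeas) ?_ hh.aestronglyMeasurable (.of_forall fun x => ?_) hh.abs ?_).2
  · exact (hh.norm.const_mul r).mono' (hmeas r)
      ((ae_restrict_mem measurableSet_ball).mono hbound)
  · refine LipschitzOnWith.of_dist_le_mul fun s _ u _ => ?_
    have hcone : |cone s x - cone u x| ≤ |s - u| := by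
      simpa [Real.dist_eq] using (lipschitzWith_cone_radius x).dist_le_mul s u
    rw [Real.dist_eq, Real.dist_eq, ← sub_mul, abs_mul, mul_comm, Real.coe_nnabs, abs_abs]
    gcongr
  · filter_upwards [ae_restrict_mem measurableSet_ball] with x hx
    simpa using (hasDerivAt_cone_radius hx).mul_const (h x)

lemma lineDeriv_cone_of_notMem_closedBall [NormedSpace ℝ E] {s : ℝ} {x : E}
    (hx : x ∉ closedBall 0 s) (v : E) :
    lineDeriv ℝ (cone s) x v = 0 := by
  have hzero : cone s =ᶠ[nhds x] fun _ => (0 : ℝ) := by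
    filter_upwards [isClosed_closedBall.isOpen_compl.mem_nhds hx] with y hy
    exact cone_of_notMem_ball (mt (ball_subset_closedBall ·) hy)
  rw [hzero.lineDeriv_eq, lineDeriv, deriv_const]

variable [InnerProductSpace ℝ E]

lemma hasFDerivAt_norm {x : E} (hx : x ≠ 0) :
    HasFDerivAt (fun y : E => ‖y‖) (‖x‖⁻¹ • innerSL ℝ x) x := by
  have hsqrt := (hasStrictFDerivAt_norm_sq x).hasFDerivAt.sqrt (by simpa)
  simp only [Real.sqrt_sq (norm_nonneg _)] at hsqrt
  convert hsqrt using 1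
  ext v
  simp only [smul_apply, coe_innerSL_apply, smul_eq_mul, nsmul_eq_mul, Nat.cast_ofNat]
  field_simp

lemma lineDeriv_cone_of_mem_ball {s : ℝ} {x : E} (hx : x ∈ ball 0 s) (hx0 : x ≠ 0) (v : E) :
    lineDeriv ℝ (cone s) x v = -(⟪x, v⟫ / ‖x‖) := by
  have hderiv : HasFDerivAt (cone s) (-(‖x‖⁻¹ • innerSL ℝ x)) x := by
    refine ((hasFDerivAt_norm hx0).const_sub s).congr_of_eventuallyEq ?_
    filter_upwards [isOpen_ball.mem_nhds hx] with y hy using cone_of_mem_ball hy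
  rw [hderiv.hasLineDerivAt v |>.lineDeriv]
  simp [div_eq_inv_mul]

end Cone

section Leibniz

open Laplacian

variable {E : Type*} [NormedAddCommGroup E]

lemma exists_lipschitzOnWith_mul [NormedSpace ℝ E] {f g : E → ℝ} {K : NNReal} {s : Set E}
    (hs : IsCompact s) (hf : LipschitzOnWith K f s) (hg : ContDiff ℝ 1 g) :
    ∃ C, LipschitzOnWith C (fun x => f x * g x) s := by
  obtain ⟨f', hf', hff'⟩ := hf.extend_real
  have hmul : LocallyLipschitz fun x => f' x * g x :=
    (contDiff_mul.locallyLipschitz (𝕂 := ℝ)).comp (hf'.locallyLipschitz.prodMk hg.locallyLipschitz)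
  obtain ⟨C, hC⟩ := hmul.locallyLipschitzOn.exists_lipschitzOnWith_of_compact hs
  exact ⟨C, fun x hx y hy => by simpa only [hff' hx, hff' hy] using hC hx hy⟩

lemma fderiv_fderiv_apply [NormedSpace ℝ E] {g : E → ℝ} (hg : ContDiff ℝ 2 g) (x v w : E) :
    fderiv ℝ (fun y => fderiv ℝ g y v) x w = iteratedFDeriv ℝ 2 g x ![w, v] := by
  have hg' : DifferentiableAt ℝ (fderiv ℝ g) x :=
    (hg.fderiv_right (m := 1) le_rfl).differentiable one_ne_zero x
  rw [fderiv_clm_apply hg' (by fun_prop), iteratedFDeriv_two_apply]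
  simp

lemma fderiv_mul_fderiv_apply [NormedSpace ℝ E] {f g : E → ℝ} {x : E}
    (hf : DifferentiableAt ℝ f x) (hg : ContDiff ℝ 2 g) (v : E) :
    fderiv ℝ (fun y => f y * fderiv ℝ g y v) x v =
      fderiv ℝ f x v * fderiv ℝ g x v + f x * iteratedFDeriv ℝ 2 g x ![v, v] := by
  have hgv : DifferentiableAt ℝ (fun y => fderiv ℝ g y v) x :=
    ((hg.fderiv_right (m := 1) le_rfl).clm_apply contDiff_const).differentiable one_ne_zero x
  rw [fderiv_fun_mul hf hgv, ← fderiv_fderiv_apply hg]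
  simp only [add_apply, smul_apply, smul_eq_mul]
  ring

variable [InnerProductSpace ℝ E]

lemma mul_fderiv_apply_eq_sum {ι : Type*} [Fintype ι] (e : OrthonormalBasis ι ℝ E) (f g : E → ℝ)
    (x y : E) :
    f x * fderiv ℝ g x y = ∑ i, f x * fderiv ℝ g x (e i) * ⟪y, e i⟫ := by
  conv_lhs => rw [← e.sum_repr' y]
  simp only [map_sum, map_smul, Finset.mul_sum, smul_eq_mul, real_inner_comm]
  exact Finset.sum_congr rfl fun i _ => by ring

variable [FiniteDimensional ℝ E]

lemma sum_fderiv_mul_fderiv_apply {ι : Type*} [Fintype ι] (e : OrthonormalBasis ι ℝ E)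
    {f g : E → ℝ} {x : E} (hf : DifferentiableAt ℝ f x) (hg : ContDiff ℝ 2 g) :
    ∑ i, fderiv ℝ (fun y => f y * fderiv ℝ g y (e i)) x (e i) =
      ⟪gradient f x, gradient g x⟫ + f x * Δ g x := by
  simp only [fderiv_mul_fderiv_apply hf hg, Finset.sum_add_distrib, ← Finset.mul_sum,
    InnerProductSpace.laplacian_eq_iteratedFDeriv_orthonormalBasis g e,
    ← e.sum_inner_mul_inner (gradient f x) (gradient g x), inner_gradient_left,
    inner_gradient_right, conj_trivial]

lemma continuous_laplacian {g : E → ℝ} (hg : ContDiff ℝ 2 g) : Continuous (Δ g) := by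
  have : Continuous (iteratedFDeriv ℝ 2 g) := hg.continuous_iteratedFDeriv le_rfl
  rw [InnerProductSpace.laplacian_eq_iteratedFDeriv_stdOrthonormalBasis]
  fun_prop

end Leibniz

section Ball

variable {E : Type*} [NormedAddCommGroup E] [NormedSpace ℝ E] [FiniteDimensional ℝ E]
  [MeasurableSpace E] [BorelSpace E] {μ : Measure E} [μ.IsAddHaarMeasure]

lemma ae_differentiableAt_of_mem_ball {F : E → ℝ} {K : NNReal} {c : E} {r : ℝ}
    (hF : LipschitzOnWith K F (ball c r)) :
    ∀ᵐ x ∂μ.restrict (ball c r), DifferentiableAt ℝ F x := by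
  rw [ae_restrict_iff' measurableSet_ball]
  filter_upwards [hF.ae_differentiableWithinAt_of_mem_of_real] with x hx hxr
  exact (hx hxr).differentiableAt (isOpen_ball.mem_nhds hxr)

lemma integrableOn_ball_fderiv {F : E → ℝ} {K : NNReal} {c : E} {r : ℝ}
    (hF : LipschitzOnWith K F (ball c r)) (v : E) :
    IntegrableOn (fun x => fderiv ℝ F x v) (ball c r) μ := by
  refine IntegrableOn.of_bound measure_ball_lt_top
    (measurable_fderiv_apply_const ℝ F v).aestronglyMeasurable (K * ‖v‖) ?_
  filter_upwards [ae_restrict_mem measurableSet_ball] with x hx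
  exact (fderiv ℝ F x).le_of_opNorm_le
    (norm_fderiv_le_of_lipschitzOn ℝ (isOpen_ball.mem_nhds hx) hF) v

lemma ball_ae_eq_closedBall [Nontrivial E] (x : E) (r : ℝ) : ball x r =ᵐ[μ] closedBall x r :=
  ae_eq_of_subset_of_measure_ge ball_subset_closedBall
    (Measure.addHaar_closedBall_eq_addHaar_ball μ x r).le measurableSet_ball.nullMeasurableSet
    measure_closedBall_lt_top.ne

end Ball

section Divergence

open Laplacian
open Module (finrank)

variable {E : Type*} [NormedAddCommGroup E] [InnerProductSpace ℝ E] [FiniteDimensional ℝ E]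
  [MeasurableSpace E] [BorelSpace E] {μ : Measure E} [μ.IsAddHaarMeasure]

lemma integrable_sphere_mul_inner {F : E → ℝ} {r : ℝ} (hr : 0 ≤ r)
    (hF : ContinuousOn F (closedBall 0 r)) (v : E) :
    Integrable (fun y : sphere (0 : E) 1 => F (r • (y : E)) * ⟪(y : E), v⟫) μ.toSphere := by
  have hmem (y : sphere (0 : E) 1) : r • (y : E) ∈ closedBall 0 r := by
    simp [norm_smul, abs_of_nonneg hr]
  have hcont : Continuous fun y : sphere (0 : E) 1 => F (r • (y : E)) :=
    hF.comp_continuous (by fun_prop) hmem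
  exact (hcont.mul (by fun_prop)).integrable_of_hasCompactSupport (.of_compactSpace _)

variable [Nontrivial E]

lemma integral_cone_mul_lineDeriv {F : E → ℝ} {K : NNReal} (hF : LipschitzWith K F) (s : ℝ)
    (v : E) :
    ∫ x, cone s x * lineDeriv ℝ F x v ∂μ = ∫ x in ball 0 s, ⟪x, v⟫ / ‖x‖ * F x ∂μ := by
  have hae : ∀ᵐ x ∂μ, lineDeriv ℝ (cone s) x (-v) * F x =
      (ball 0 s).indicator (fun x => ⟪x, v⟫ / ‖x‖ * F x) x := by
    filter_upwards [Measure.ae_ne μ 0, (ball_ae_eq_closedBall (μ := μ) 0 s).mem_iff] with x hx0 hx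
    by_cases hmem : x ∈ ball 0 s
    · rw [Set.indicator_of_mem hmem, lineDeriv_cone_of_mem_ball hmem hx0, inner_neg_right, neg_div,
        neg_neg]
    · rw [Set.indicator_of_notMem hmem, lineDeriv_cone_of_notMem_closedBall (mt hx.2 hmem),
        zero_mul]
  calc ∫ x, cone s x * lineDeriv ℝ F x v ∂μ = ∫ x, lineDeriv ℝ F x v * cone s x ∂μ := by
        simp only [mul_comm]
    _ = ∫ x, lineDeriv ℝ (cone s) x (-v) * F x ∂μ :=
        hF.integral_lineDeriv_mul_eq (lipschitzWith_cone s) (hasCompactSupport_cone s) v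
    _ = ∫ x in ball 0 s, ⟪x, v⟫ / ‖x‖ * F x ∂μ := by
        rw [integral_congr_ae hae, integral_indicator measurableSet_ball]

lemma setIntegral_cone_mul_lineDeriv {F : E → ℝ} {K : NNReal} (hF : LipschitzWith K F) {r s : ℝ}
    (hs : 0 ≤ s) (hsr : s ≤ r) (v : E) :
    ∫ x in ball 0 r, cone s x * lineDeriv ℝ F x v ∂μ = ∫ ρ in 0..s, ρ ^ (finrank ℝ E - 1) *
      ∫ y : sphere (0 : E) 1, F (ρ • (y : E)) * ⟪(y : E), v⟫ ∂μ.toSphere := by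
  have hint : IntegrableOn (fun x : E => ⟪x, v⟫ / ‖x‖ * F x) (ball 0 s) μ := by
    have hFint : IntegrableOn F (ball 0 s) μ :=
      (hF.continuous.continuousOn.integrableOn_compact (isCompact_closedBall 0 s)).mono_set
        ball_subset_closedBall
    refine hFint.bdd_mul (c := ‖v‖) ?_ ?_
    · exact Measurable.aestronglyMeasurable (by fun_prop)
    · refine .of_forall fun x => ?_
      rw [norm_div, norm_norm]
      exact div_le_of_le_mul₀ (norm_nonneg _) (norm_nonneg _)
        (mul_comm ‖v‖ ‖x‖ ▸ norm_inner_le_norm x v)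
  have hzero (x : E) (hx : x ∉ ball 0 r) : cone s x * lineDeriv ℝ F x v = 0 := by
    rw [cone_of_notMem_ball (mt (ball_subset_ball hsr ·) hx), zero_mul]
  rw [setIntegral_eq_integral_of_forall_compl_eq_zero hzero, integral_cone_mul_lineDeriv hF,
    setIntegral_ball_eq_integral_sphere hs hint]
  refine intervalIntegral.integral_congr_Ioo_of_le hs fun ρ hρ => ?_
  have hρ' : ρ ≠ 0 := hρ.1.ne'
  have hterm (y : sphere (0 : E) 1) :
      ⟪ρ • (y : E), v⟫ / ‖ρ • (y : E)‖ * F (ρ • (y : E)) = F (ρ • (y : E)) * ⟪(y : E), v⟫ := by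
    rw [norm_smul, norm_eq_of_mem_sphere, Real.norm_of_nonneg hρ.1.le, real_inner_smul_left]
    field_simp
  simp only [hterm]

lemma integral_ball_lineDeriv {F : E → ℝ} {K : NNReal} (hF : LipschitzWith K F) {r : ℝ}
    (hr : 0 < r) (v : E) :
    ∫ x in ball 0 r, lineDeriv ℝ F x v ∂μ = r ^ (finrank ℝ E - 1) *
      ∫ y : sphere (0 : E) 1, F (r • (y : E)) * ⟪(y : E), v⟫ ∂μ.toSphere := by
  have hint : IntegrableOn (lineDeriv ℝ F · v) (ball 0 r) μ :=
    ((hF.locallyIntegrable_lineDeriv v).integrableOn_isCompact (isCompact_closedBall 0 r)).mono_set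
      ball_subset_closedBall
  have hcont : Continuous fun ρ : ℝ => ρ ^ (finrank ℝ E - 1) *
      ∫ y : sphere (0 : E) 1, F (ρ • (y : E)) * ⟪(y : E), v⟫ ∂μ.toSphere := by
    have hF' := hF.continuous
    refine (continuous_pow _).mul ?_
    simpa only [Measure.restrict_univ] using continuous_parametric_integral_of_continuous
      (μ := μ.toSphere) (f := fun (ρ : ℝ) (y : sphere (0 : E) 1) => F (ρ • (y : E)) * ⟪(y : E), v⟫)
      (by fun_prop) isCompact_univ
  have hball := (hasDerivAt_setIntegral_cone_mul hint).hasDerivWithinAt (s := Set.Icc 0 r)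
  have hsphere := (hcont.integral_hasStrictDerivAt 0 r).hasDerivAt.hasDerivWithinAt
    (s := Set.Icc 0 r)
  have hr' : r ∈ Set.Icc 0 r := Set.right_mem_Icc.2 hr.le
  exact ((uniqueDiffOn_Icc hr) r hr').eq_deriv _ hball
    (hsphere.congr (fun s hs => setIntegral_cone_mul_lineDeriv hF hs.1 hs.2 v)
      (setIntegral_cone_mul_lineDeriv hF hr.le le_rfl v))

lemma integral_ball_fderiv {F : E → ℝ} {K : NNReal} {r : ℝ} (hr : 0 < r)
    (hF : LipschitzOnWith K F (closedBall 0 r)) (v : E) :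
    ∫ x in ball 0 r, fderiv ℝ F x v ∂μ = r ^ (finrank ℝ E - 1) *
      ∫ y : sphere (0 : E) 1, F (r • (y : E)) * ⟪(y : E), v⟫ ∂μ.toSphere := by
  obtain ⟨F', hF', hFF'⟩ := hF.extend_real
  have hinterior : ∀ᵐ x ∂μ.restrict (ball 0 r), fderiv ℝ F x v = lineDeriv ℝ F' x v := by
    filter_upwards [ae_restrict_mem measurableSet_ball,
      ae_restrict_of_ae hF'.ae_differentiableAt_of_real] with x hx hdiff
    have heq : F =ᶠ[nhds x] F' :=
      Filter.mem_of_superset (closedBall_mem_nhds_of_mem hx) hFF'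
    rw [heq.fderiv_eq, hdiff.lineDeriv_eq_fderiv]
  have hsphere (y : sphere (0 : E) 1) : F (r • (y : E)) = F' (r • (y : E)) :=
    hFF' (by simp [norm_smul, abs_of_pos hr])
  simp only [integral_congr_ae hinterior, integral_ball_lineDeriv hF' hr, hsphere]

lemma integral_ball_inner_gradient {f g : E → ℝ} {K : NNReal} {r : ℝ} (hr : 0 < r)
    (hf : LipschitzOnWith K f (closedBall 0 r)) (hg : ContDiff ℝ 2 g) :
    ∫ x in ball 0 r, ⟪gradient f x, gradient g x⟫ ∂μ =
      r ^ (finrank ℝ E - 1) *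
          ∫ y : sphere (0 : E) 1, f (r • (y : E)) * fderiv ℝ g (r • (y : E)) y ∂μ.toSphere -
        ∫ x in ball 0 r, f x * Δ g x ∂μ := by
  let e := stdOrthonormalBasis ℝ E
  let F i (x : E) : ℝ := f x * fderiv ℝ g x (e i)
  have hg' (i) : ContDiff ℝ 1 fun x => fderiv ℝ g x (e i) :=
    (hg.fderiv_right (m := 1) le_rfl).clm_apply contDiff_const
  have hF (i) : ∃ C, LipschitzOnWith C (F i) (closedBall 0 r) :=
    exists_lipschitzOnWith_mul (isCompact_closedBall 0 r) hf (hg' i)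
  choose C hF using hF
  have hFint (i) : IntegrableOn (fun x => fderiv ℝ (F i) x (e i)) (ball 0 r) μ :=
    integrableOn_ball_fderiv ((hF i).mono ball_subset_closedBall) (e i)
  have hflap : IntegrableOn (fun x => f x * Δ g x) (ball 0 r) μ :=
    ((hf.continuousOn.mul (continuous_laplacian hg).continuousOn).integrableOn_compact
      (isCompact_closedBall 0 r)).mono_set ball_subset_closedBall
  have hdiv : ∀ᵐ x ∂μ.restrict (ball 0 r), ⟪gradient f x, gradient g x⟫ =
      ∑ i, fderiv ℝ (F i) x (e i) - f x * Δ g x := by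
    filter_upwards [ae_differentiableAt_of_mem_ball (hf.mono ball_subset_closedBall)] with x hx
    rw [sum_fderiv_mul_fderiv_apply e hx hg, add_sub_cancel_right]
  have hnormal (y : sphere (0 : E) 1) : f (r • (y : E)) * fderiv ℝ g (r • (y : E)) y =
      ∑ i, F i (r • (y : E)) * ⟪(y : E), e i⟫ := mul_fderiv_apply_eq_sum e f g _ _
  rw [integral_congr_ae hdiv, integral_sub (integrable_finsetSum _ fun i _ => hFint i) hflap,
    integral_finsetSum _ fun i _ => hFint i]
  simp only [hnormal]
  rw [integral_finsetSum _ fun i _ => integrable_sphere_mul_inner hr.le (hF i).continuousOn (e i),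
    Finset.mul_sum]
  exact congrArg (· - _) (Finset.sum_congr rfl fun i _ => integral_ball_fderiv hr (hF i) (e i))

end Divergence

section Polynomial

open Laplacian
open Polynomial (derivative)

variable {d : ℕ}

lemma pderiv_sumSq (i : Fin d) : pderiv i (sumSq d) = 2 * X i := by
  classical
  simp [sumSq, Derivation.leibniz_pow, pderiv_X, Pi.single_apply]

lemma pderiv_aeval_sumSq (i : Fin d) (q : Polynomial ℝ) :
    pderiv i (Polynomial.aeval (sumSq d) q) =
      2 * X i * Polynomial.aeval (sumSq d) (derivative q) := by
  rw [Derivation.map_aeval, pderiv_sumSq, smul_eq_mul, mul_comm]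

lemma sum_X_mul_pderiv_aeval_sumSq_mul {m : ℕ} {H : MvPolynomial (Fin d) ℝ}
    (hH : H.IsHomogeneous m) (q : Polynomial ℝ) :
    ∑ i, X i * pderiv i (Polynomial.aeval (sumSq d) q * H) =
      Polynomial.aeval (sumSq d)
        (2 * Polynomial.X * derivative q + (m : Polynomial ℝ) * q) * H := by
  have hterm (i : Fin d) : X i * pderiv i (Polynomial.aeval (sumSq d) q * H) =
      X i ^ 2 * (2 * Polynomial.aeval (sumSq d) (derivative q) * H) +
        Polynomial.aeval (sumSq d) q * (X i * pderiv i H) := by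
    rw [Derivation.leibniz, pderiv_aeval_sumSq, smul_eq_mul, smul_eq_mul]
    ring
  simp only [hterm, Finset.sum_add_distrib, ← Finset.sum_mul, ← Finset.mul_sum,
    hH.sum_X_mul_pderiv, nsmul_eq_mul, map_add, map_mul, map_ofNat, map_natCast,
    Polynomial.aeval_X]
  rw [← sumSq]
  ring

lemma mvLaplacian_mul (p q : MvPolynomial (Fin d) ℝ) :
    mvLaplacian (p * q) =
      mvLaplacian p * q + 2 * ∑ i, pderiv i p * pderiv i q + p * mvLaplacian q := by
  simp only [mvLaplacian, Finset.sum_mul, Finset.mul_sum, ← Finset.sum_add_distrib]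
  refine Finset.sum_congr rfl fun i _ => ?_
  simp only [Derivation.leibniz, map_add, smul_eq_mul]
  ring

lemma mvLaplacian_aeval_sumSq (q : Polynomial ℝ) :
    mvLaplacian (Polynomial.aeval (sumSq d) q) = Polynomial.aeval (sumSq d)
      (4 * Polynomial.X * derivative (derivative q) +
        2 * (d : Polynomial ℝ) * derivative q) := by
  have hterm (i : Fin d) : pderiv i (pderiv i (Polynomial.aeval (sumSq d) q)) =
      X i ^ 2 * (4 * Polynomial.aeval (sumSq d)
        (derivative (derivative q))) +
      2 * Polynomial.aeval (sumSq d) (derivative q) := by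
    rw [pderiv_aeval_sumSq, ← map_ofNat (C : ℝ →+* MvPolynomial (Fin d) ℝ) 2, mul_assoc,
      pderiv_C_mul, Derivation.leibniz, pderiv_aeval_sumSq, pderiv_X_self]
    simp only [smul_eq_mul, map_ofNat]
    ring
  simp only [mvLaplacian, hterm, Finset.sum_add_distrib, ← Finset.sum_mul, Finset.sum_const,
    Finset.card_univ, Fintype.card_fin, nsmul_eq_mul, map_add, map_mul, map_ofNat, map_natCast,
    Polynomial.aeval_X]
  rw [← sumSq]
  ring

lemma mvLaplacian_aeval_sumSq_mul {m : ℕ} {H : MvPolynomial (Fin d) ℝ}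
    (hH : H.IsHomogeneous m) (hHarm : mvLaplacian H = 0) (q : Polynomial ℝ) :
    mvLaplacian (Polynomial.aeval (sumSq d) q * H) = Polynomial.aeval (sumSq d)
      (4 * Polynomial.X * derivative (derivative q) +
        (2 * (d : Polynomial ℝ) + 4 * (m : Polynomial ℝ)) * derivative q) * H := by
  have hcross : ∑ i, pderiv i (Polynomial.aeval (sumSq d) q) * pderiv i H =
      2 * Polynomial.aeval (sumSq d) (derivative q) * (m * H) := by
    rw [← nsmul_eq_mul m, ← hH.sum_X_mul_pderiv, Finset.mul_sum]
    refine Finset.sum_congr rfl fun i _ => ?_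
    rw [pderiv_aeval_sumSq]
    ring
  rw [mvLaplacian_mul, hcross, hHarm, mvLaplacian_aeval_sumSq]
  simp only [map_add, map_mul, map_ofNat, map_natCast]
  ring

lemma pEval_aeval_sumSq (q : Polynomial ℝ) (x : Edim d) :
    pEval (Polynomial.aeval (sumSq d) q) x = q.eval (‖x‖ ^ 2) := by
  have hnorm : aeval (fun i => x i) (sumSq d) = ‖x‖ ^ 2 := by
    simp [EuclideanSpace.norm_sq_eq, sumSq]
  rw [pEval, ← coe_aeval_eq_eval, RingHom.coe_coe, ← Polynomial.aeval_algHom_apply, hnorm,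
    Polynomial.coe_aeval_eq_eval]

lemma pEval_mul (p q : MvPolynomial (Fin d) ℝ) (x : Edim d) :
    pEval (p * q) x = pEval p x * pEval q x :=
  eval_mul

lemma contDiff_pEval (p : MvPolynomial (Fin d) ℝ) {k : WithTop ℕ∞} : ContDiff ℝ k (pEval p) := by
  unfold pEval
  simp only [eval_eq]
  fun_prop

lemma fderiv_pEval_apply (p : MvPolynomial (Fin d) ℝ) (x v : Edim d) :
    fderiv ℝ (pEval p) x v = ∑ i, v i * pEval (pderiv i p) x := by
  have hcoord (i : Fin d) : HasFDerivAt (fun y : Edim d => y i)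
      (EuclideanSpace.proj i : Edim d →L[ℝ] ℝ) x :=
    (EuclideanSpace.proj i : Edim d →L[ℝ] ℝ).hasFDerivAt
  have hdiff (p : MvPolynomial (Fin d) ℝ) : DifferentiableAt ℝ (pEval p) x :=
    (contDiff_pEval p).differentiable one_ne_zero x
  induction p using MvPolynomial.induction_on with
  | C a =>
    have hconst : pEval (C a) = fun _ : Edim d => a := by
      funext y; simp [pEval]
    simp [hconst, pEval]
  | add p q hp hq =>
    have hadd : pEval (p + q) = fun y : Edim d => pEval p y + pEval q y := by
      funext y; simp [pEval]
    rw [hadd, fderiv_fun_add (hdiff p) (hdiff q)]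
    simp [hp, hq, pEval, mul_add, Finset.sum_add_distrib]
  | mul_X p i hp =>
    have hmul : pEval (p * X i) = fun y : Edim d => pEval p y * y i := by
      funext y; simp [pEval]
    have hstep (k : Fin d) : v k * pEval (pderiv k (p * X i)) x =
        (if k = i then pEval p x * v i else 0) + x i * (v k * pEval (pderiv k p) x) := by
      by_cases hk : k = i
      · subst hk
        simp only [pEval, Derivation.leibniz, pderiv_X_self, smul_eq_mul, map_add, map_mul, eval_X,
          map_one, if_true]
        ring
      · simp only [pEval, Derivation.leibniz, pderiv_X_of_ne (Ne.symm hk), smul_eq_mul, map_add,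
          map_mul, eval_X, map_zero, if_neg hk]
        ring
    rw [hmul, ((hdiff p).hasFDerivAt.fun_mul (hcoord i)).fderiv]
    simp [Finset.sum_congr rfl fun k _ => hstep k, hp, Finset.sum_add_distrib, Finset.mul_sum,
      -Derivation.leibniz]

lemma fderiv_pEval_single (p : MvPolynomial (Fin d) ℝ) (i : Fin d) (x : Edim d) :
    fderiv ℝ (pEval p) x (EuclideanSpace.single i 1) = pEval (pderiv i p) x := by
  simp [fderiv_pEval_apply]

lemma fderiv_pEval_self (p : MvPolynomial (Fin d) ℝ) (x : Edim d) :
    fderiv ℝ (pEval p) x x = pEval (∑ i, X i * pderiv i p) x := by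
  simp [fderiv_pEval_apply, pEval]

lemma laplacian_pEval (p : MvPolynomial (Fin d) ℝ) : Δ (pEval p) = pEval (mvLaplacian p) := by
  funext x
  simp only [InnerProductSpace.laplacian_eq_iteratedFDeriv_orthonormalBasis _
    (EuclideanSpace.basisFun (Fin d) ℝ), EuclideanSpace.basisFun_apply,
    ← fderiv_fderiv_apply (contDiff_pEval p), fderiv_pEval_single]
  simp [mvLaplacian, pEval]

end Polynomial

section Sobolev

open Laplacian

variable {d : ℕ}

-- In `innerI` the scope of the ball integral includes the boundary term, which therefore acquires
-- a factor `lam * vol B^d / ω_d`; this is harmless for `g` vanishing on the sphere.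
lemma innerI_eq_of_eq_zero_on_sphere (hd : d ≠ 0) (lam : ℝ) {f g : Edim d → ℝ} {K : NNReal}
    (hf : LipschitzOnWith K f (closedBall 0 1)) (hg : ContDiff ℝ 2 g)
    (hg0 : ∀ x, ‖x‖ = 1 → g x = 0) :
    innerI d lam f g =
      (lam / omegaD d) * (∫ y : sphere (0 : Edim d) 1, f y * fderiv ℝ g y y ∂(sphMeasure d) -
        ∫ x in closedBall (0 : Edim d) 1, f x * Δ g x) := by
  have : NeZero d := ⟨hd⟩
  have hboundary (y : sphere (0 : Edim d) 1) : f y * g y = 0 := by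
    rw [hg0 y (norm_eq_of_mem_sphere y), mul_zero]
  simp only [innerI, hboundary, integral_zero, mul_zero, add_zero]
  simpa only [sphMeasure, one_pow, one_mul, one_smul,
    setIntegral_congr_set (ball_ae_eq_closedBall _ _)]
    using congrArg (lam / omegaD d * ·)
      (integral_ball_inner_gradient (μ := volume) one_pos hf hg)

variable {m : ℕ} {H : MvPolynomial (Fin d) ℝ}

lemma pEval_jacobiProfile_mul_of_norm_eq_one (N : ℕ) (β : ℝ) {x : Edim d} (hx : ‖x‖ = 1) :
    pEval (Polynomial.aeval (sumSq d) (jacobiProfile N β) * H) x = 0 := by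
  rw [pEval_mul, pEval_aeval_sumSq, hx, one_pow, jacobiProfile_eval_one, zero_mul]

lemma fderiv_jacobiProfile_mul_of_norm_eq_one (hH : H.IsHomogeneous m) (N : ℕ) (β : ℝ)
    {x : Edim d} (hx : ‖x‖ = 1) :
    fderiv ℝ (pEval (Polynomial.aeval (sumSq d) (jacobiProfile N β) * H)) x x =
      -2 * (N + 1) * pEval H x := by
  rw [fderiv_pEval_self, sum_X_mul_pderiv_aeval_sumSq_mul hH, pEval_mul, pEval_aeval_sumSq, hx]
  simp only [one_pow, Polynomial.eval_add, Polynomial.eval_mul, Polynomial.eval_ofNat,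
    Polynomial.eval_X, Polynomial.eval_natCast, jacobiProfile_eval_one,
    derivative_jacobiProfile_eval_one]
  ring

lemma laplacian_jacobiProfile_mul (hH : H.IsHomogeneous m) (hHarm : mvLaplacian H = 0) (N : ℕ)
    {β : ℝ} (hβ : β = m + ((d : ℝ) - 2) / 2) (x : Edim d) :
    Δ (pEval (Polynomial.aeval (sumSq d) (jacobiProfile N β) * H)) x =
      -4 * (N + 1) * (N + 1 + β) * (jacobiR N 1 β (2 * ‖x‖ ^ 2 - 1) * pEval H x) := by
  have hode := congrArg (Polynomial.eval (‖x‖ ^ 2)) (jacobiProfile_ode N β)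
  rw [laplacian_pEval, mvLaplacian_aeval_sumSq_mul hH hHarm, pEval_mul, pEval_aeval_sumSq]
  simp only [Polynomial.eval_add, Polynomial.eval_mul, Polynomial.eval_X, Polynomial.eval_C,
    Polynomial.eval_neg, Polynomial.eval_comp, Polynomial.eval_sub, Polynomial.eval_one,
    Polynomial.eval_ofNat, Polynomial.eval_natCast, jacobiR] at hode ⊢
  subst hβ
  linear_combination (4 * pEval H x) * hode

lemma Upoly_eq_jacobiProfile_mul (Y : (m : ℕ) → Fin (sigmaDim d m) → MvPolynomial (Fin d) ℝ)
    {n j : ℕ} (hj : 1 ≤ j) (ν : Fin (sigmaDim d (n - 2 * j))) :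
    Upoly d Y n j ν = Polynomial.aeval (sumSq d)
      (jacobiProfile (j - 1) ((n : ℝ) - 2 * (j : ℝ) + ((d : ℝ) - 2) / 2)) * Y (n - 2 * j) ν := by
  rw [Upoly, if_neg (Nat.one_le_iff_ne_zero.1 hj), jacobiProfile, map_mul, Polynomial.aeval_comp]
  simp only [map_sub, map_mul, map_one, map_ofNat, Polynomial.aeval_X]

end Sobolev

theorem stmt13_general (d : ℕ) (hd : d ≠ 0) (lam : ℝ)
    (Y : (m : ℕ) → Fin (sigmaDim d m) → MvPolynomial (Fin d) ℝ)
    (f : Edim d → ℝ) (K : NNReal) (hf : LipschitzOnWith K f (closedBall (0 : Edim d) 1))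
    (n j : ℕ) (hj : 1 ≤ j) (hjn : 2 * j ≤ n) (ν : Fin (sigmaDim d (n - 2 * j)))
    (hYhom : (Y (n - 2 * j) ν).IsHomogeneous (n - 2 * j))
    (hYharm : mvLaplacian (Y (n - 2 * j) ν) = 0) :
    innerI d lam f (pEval (Upoly d Y n j ν)) =
      -2 * (j : ℝ) * lam *
          ((1 / omegaD d) * ∫ y : sphere (0 : Edim d) 1,
            f y * pEval (Y (n - 2 * j) ν) y ∂(sphMeasure d)) +
        4 * (j : ℝ) * ((n : ℝ) - (j : ℝ) + ((d : ℝ) - 2) / 2) *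
          ((lam / omegaD d) * ∫ y in closedBall (0 : Edim d) 1,
            f y * (jacobiR (j - 1) 1 ((n : ℝ) - 2 * (j : ℝ) + ((d : ℝ) - 2) / 2)
                (2 * ‖y‖ ^ 2 - 1) * pEval (Y (n - 2 * j) ν) y)) := by
  have hβ : (n : ℝ) - 2 * j + ((d : ℝ) - 2) / 2 = (n - 2 * j : ℕ) + ((d : ℝ) - 2) / 2 := by
    rw [Nat.cast_sub hjn]
    push_cast
    ring
  rw [Upoly_eq_jacobiProfile_mul Y hj, innerI_eq_of_eq_zero_on_sphere hd lam hf (contDiff_pEval _)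
    fun x hx => pEval_jacobiProfile_mul_of_norm_eq_one _ _ hx]
  simp only [norm_eq_of_mem_sphere, fderiv_jacobiProfile_mul_of_norm_eq_one hYhom,
    laplacian_jacobiProfile_mul hYhom hYharm _ hβ, Nat.cast_pred hj, mul_left_comm (f _),
    integral_const_mul]
  ring

/-- for `f` continuously differentiable on the closed unit ball and `j ≥ 1`,
`⟨f, U_{j,ν}^n⟩_I = -2jλ·(1/ω_d)∫_{S^{d-1}} f Y_ν^{n-2j} dω
+ 4j(n-j+(d-2)/2)·(λ/ω_d)∫_{B^d} f(y) P_{j-1,ν}^{n-2}(W₁;y) dy`. -/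
theorem stmt13 (d : ℕ) (hd : 2 ≤ d) (lam : ℝ) (hlam : 0 < lam)
    (Y : (m : ℕ) → Fin (sigmaDim d m) → MvPolynomial (Fin d) ℝ)
    (hYhom : ∀ m ν, (Y m ν).IsHomogeneous m)
    (hYharm : ∀ m ν, mvLaplacian (Y m ν) = 0)
    (hYon : ∀ (m k : ℕ) (ν : Fin (sigmaDim d m)) (μ : Fin (sigmaDim d k)),
      (1 / omegaD d) * ∫ y : sphere (0 : Edim d) 1,
          pEval (Y m ν) y * pEval (Y k μ) y ∂(sphMeasure d) =
        if m = k ∧ (ν : ℕ) = (μ : ℕ) then 1 else 0)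
    (f : Edim d → ℝ) (hf : ContDiffOn ℝ 1 f (closedBall (0 : Edim d) 1))
    (n j : ℕ) (hn : 2 ≤ n) (hj : 1 ≤ j) (hjn : 2 * j ≤ n)
    (ν : Fin (sigmaDim d (n - 2 * j))) :
    innerI d lam f (pEval (Upoly d Y n j ν)) =
      -2 * (j : ℝ) * lam *
          ((1 / omegaD d) * ∫ y : sphere (0 : Edim d) 1,
            f y * pEval (Y (n - 2 * j) ν) y ∂(sphMeasure d)) +
        4 * (j : ℝ) * ((n : ℝ) - (j : ℝ) + ((d : ℝ) - 2) / 2) *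
          ((lam / omegaD d) * ∫ y in closedBall (0 : Edim d) 1,
            f y * (jacobiR (j - 1) 1 ((n : ℝ) - 2 * (j : ℝ) + ((d : ℝ) - 2) / 2)
                (2 * ‖y‖ ^ 2 - 1) * pEval (Y (n - 2 * j) ν) y)) := by
  obtain ⟨K, hK⟩ :=
    hf.exists_lipschitzOnWith one_ne_zero (convex_closedBall _ _) (isCompact_closedBall _ _)
  exact stmt13_general d (by omega) lam Y f K hK n j hj hjn ν (hYhom _ ν) (hYharm _ ν)
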